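/- Let Π = G ∗_A G' be the amalgamated free product of groups G and G' over a common subgroup A (the pushout of two injective group homomorphisms A → G and A → G'), where A is a proper subgroup of G and a proper subgroup of G' (neither inclusion is surjective). If the image of A is an RS-subgroup of G or the image of A is an RS-subgroup of G', then Π is a cut-group. -/

import Mathlib

/-- A group `G` is a *cut-group* if every central unit of the integral group ring `ℤ[G]`
is trivial, i.e. of the form `±g` for some `g ∈ G`. -/
def IsCutGroup (G : Type*) [Group G] : Prop :=
  ∀ u : (MonoidAlgebra ℤ G)ˣ,
    (u : MonoidAlgebra ℤ G) ∈ Subring.center (MonoidAlgebra ℤ G) →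
    ∃ g : G, (u : MonoidAlgebra ℤ G) = MonoidAlgebra.of ℤ G g ∨
      (u : MonoidAlgebra ℤ G) = -(MonoidAlgebra.of ℤ G g)

/-- A torsion element `x` of a group `G` is an *RS-element* of `G` if for every positive
integer `j` coprime to the order of `x`, `x ^ j` is conjugate in `G` to `x` or to `x⁻¹`. -/
def IsRSElement {G : Type*} [Group G] (x : G) : Prop :=
  ∀ j : ℕ, 0 < j → Nat.Coprime j (orderOf x) → (IsConj (x ^ j) x ∨ IsConj (x ^ j) x⁻¹)

/-- A subgroup `A` of `G` is an *RS-subgroup* of `G` if every torsion element of `A`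
is an RS-element of `G`. -/
def IsRSSubgroup {G : Type*} [Group G] (A : Subgroup G) : Prop :=
  ∀ a ∈ A, IsOfFinOrder a → IsRSElement a

/-!
Let `u` be a central unit of `ℤ[Π]` and `v = u u*`, where `*` is the involution inverting group
elements. The supports of `u` and `u⁻¹` consist of elements with finitely many conjugates, so they
generate a normal subgroup `N` whose torsion elements form a finite subgroup `T` with `N ⧸ T` free
abelian. The centre of `ℤ[N]` is reduced and units over a domain are homogeneous for a grading by a
free abelian group, so the homogeneous parts of `u` annihilate one another. As `x y = 0` forces
`x y* = 0` for central elements, `v` is supported on `T`.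

A finite normal subgroup of an amalgam lies in the amalgamated subgroup: any other element `t` is
either of infinite order or becomes so when multiplied by a suitable conjugate of itself. The RS
condition therefore makes the coefficients of `v` constant along powers coprime to `|T|`. By Galois
theory the eigenvalues of `v` are then rational; being algebraic integers with integral inverses,
they are `±1`. The trace of `v²` in the regular representation of `T` gives `∑ v_g² = 1`, while
`v₁ = ∑ u_g²` is positive. So `∑ u_g² = 1`, that is `u = ±g`.
-/

open MonoidAlgebra Monoid PushoutI
open scoped MonoidAlgebra commutatorElement

section FiniteConjugacyClasses

open Subgroup

variable {G : Type*} [Group G]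

lemma isOfFinOrder_of_mem {K : Subgroup G} [Finite K] {g : G} (hg : g ∈ K) : IsOfFinOrder g :=
  Submonoid.isOfFinOrder_coe.2 (isOfFinOrder_of_finite (⟨g, hg⟩ : K))

lemma index_centralizer_singleton (g : G) :
    (centralizer {g}).index = (conjugatesOf g).ncard := by
  have h := MulAction.index_stabilizer (ConjAct G) g
  rw [ConjAct.stabilizer_eq_centralizer, ConjAct.orbit_eq_carrier_conjClasses] at h
  exact h

lemma finiteIndex_center_of_finite_conjugatesOf {S : Set G} (hS : S.Finite)
    (hgen : closure S = ⊤) (hconj : ∀ s ∈ S, (conjugatesOf s).Finite) :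
    (center G).FiniteIndex := by
  have : Finite S := hS
  rw [center_eq_infi' hgen]
  refine finiteIndex_iInf fun s ↦ ⟨?_⟩
  rw [index_centralizer_singleton]
  exact Set.ncard_ne_zero_of_mem mem_conjugatesOf_self (hconj s s.2)

lemma commutatorElement_mul_left_of_mem_center {z : G} (hz : z ∈ center G) (g h : G) :
    ⁅g * z, h⁆ = ⁅g, h⁆ := by
  have hzh : ⁅z, h⁆ = 1 :=
    commutatorElement_eq_one_iff_commute.2 (Subgroup.mem_center_iff.1 hz h).symm
  rw [commutatorElement_mul_left_eq_conj_mul, hzh, mul_one, mul_inv_cancel, one_mul]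

lemma finite_commutatorSet [(center G).FiniteIndex] : (commutatorSet G).Finite := by
  refine (Set.finite_range fun p : (G ⧸ center G) × (G ⧸ center G) ↦ ⁅p.1.out, p.2.out⁆).subset ?_
  rintro _ ⟨g, h, rfl⟩
  obtain ⟨⟨z, hz⟩, hgz⟩ := QuotientGroup.mk_out_eq_mul (center G) g
  obtain ⟨⟨w, hw⟩, hhw⟩ := QuotientGroup.mk_out_eq_mul (center G) h
  refine ⟨(g, h), ?_⟩
  simp only [hgz, hhw]
  rw [commutatorElement_mul_left_of_mem_center hz, ← commutatorElement_inv,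
    commutatorElement_mul_left_of_mem_center hw, commutatorElement_inv]

variable (G) in
/-- The quotient map from `G` onto its largest torsion-free abelian quotient, by which the group
ring of `G` is graded. -/
def toTorsionFreeAbelianization : G →* Abelianization G ⧸ CommGroup.torsion (Abelianization G) :=
  (QuotientGroup.mk' _).comp Abelianization.of

lemma ker_toTorsionFreeAbelianization :
    (toTorsionFreeAbelianization G).ker =
      (CommGroup.torsion (Abelianization G)).comap Abelianization.of := by
  rw [toTorsionFreeAbelianization, ← MonoidHom.comap_ker, QuotientGroup.ker_mk']

lemma mem_ker_toTorsionFreeAbelianization [Finite (commutator G)] {g : G} :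
    g ∈ (toTorsionFreeAbelianization G).ker ↔ IsOfFinOrder g := by
  rw [ker_toTorsionFreeAbelianization]
  refine ⟨fun hg ↦ ?_, fun hg ↦ Abelianization.of.isOfFinOrder hg⟩
  obtain ⟨n, hn, hgn⟩ :=
    isOfFinOrder_iff_pow_eq_one.1 (show IsOfFinOrder (Abelianization.of g) from hg)
  have hmem : g ^ n ∈ commutator G :=
    (QuotientGroup.eq_one_iff _).1 ((map_pow Abelianization.of g n).trans hgn)
  exact (isOfFinOrder_pow.1 (isOfFinOrder_of_mem hmem)).resolve_right hn.ne'

lemma finite_torsion_of_fg (A : Type*) [CommGroup A] [Group.FG A] :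
    Finite (CommGroup.torsion A) := by
  have : Module.Finite ℤ (Additive A) := Module.Finite.iff_addGroup_fg.2 inferInstance
  have hfg : Module.Finite ℤ (AddSubgroup.toIntSubmodule (CommGroup.torsion A).toAddSubgroup) :=
    inferInstance
  have : Group.FG (CommGroup.torsion A) :=
    GroupFG.iff_add_fg.2 (Module.Finite.iff_addGroup_fg.1 hfg)
  exact CommGroup.finite_of_fg_isMulTorsion _ fun a ↦ Submonoid.isOfFinOrder_coe.1 a.2

instance [Finite (commutator G)] [Group.FG G] : Finite (toTorsionFreeAbelianization G).ker := by
  have : Group.FG (Abelianization G) := QuotientGroup.fg _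
  have htors : (CommGroup.torsion (Abelianization G) : Set (Abelianization G)).Finite :=
    finite_torsion_of_fg (Abelianization G)
  rw [ker_toTorsionFreeAbelianization]
  refine htors.preimage' fun a _ ↦ ?_
  obtain ⟨g, rfl⟩ := QuotientGroup.mk_surjective a
  have : Finite (Abelianization.of (G := G)).ker := by
    rwa [Abelianization.ker_of]
  exact Finite.of_equiv _ ((Abelianization.of (G := G)).fiberEquivKer g).symm

instance [Finite (commutator G)] : (toTorsionFreeAbelianization G).ker.Characteristic :=
  characteristic_iff_comap_eq.2 fun e ↦ by
    ext g
    simp only [mem_comap, mem_ker_toTorsionFreeAbelianization]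
    exact Function.Injective.isOfFinOrder_iff (f := e.toMonoidHom) e.injective

end FiniteConjugacyClasses

section Spectrum

variable {K V : Type*} [Field K] [IsAlgClosed K] [AddCommGroup V] [Module K V]
  [FiniteDimensional K V] {f : Module.End K V}

lemma trace_pow_eq_sum_of_isSemisimple (hf : f.IsSemisimple) (j : ℕ) :
    LinearMap.trace K V (f ^ j) =
      ∑ μ ∈ f.finite_hasEigenvalue.toFinset, μ ^ j * Module.finrank K (f.eigenspace μ) := by
  classical
  have hmaps (μ : K) : Set.MapsTo (f ^ j) (f.eigenspace μ) (f.eigenspace μ) :=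
    Module.End.mapsTo_genEigenspace_of_comm ((Commute.refl f).pow_right j) μ 1
  have hinternal := DirectSum.isInternal_submodule_of_iSupIndep_of_iSup_eq_top
    f.eigenspaces_iSupIndep hf.iSup_eigenspace_eq_top
  have hfin : {μ | f.eigenspace μ ≠ ⊥}.Finite := f.finite_hasEigenvalue
  rw [LinearMap.trace_eq_sum_trace_restrict' hinternal hfin hmaps]
  refine Finset.sum_congr rfl fun μ _ ↦ ?_
  have hscalar : (f ^ j).restrict (hmaps μ) = μ ^ j • LinearMap.id := by
    ext ⟨x, hx⟩
    have hxj := Module.End.aeval_apply_of_mem_apply_eq_smul (p := Polynomial.X ^ j)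
      (Module.End.mem_eigenspace_iff.1 hx)
    simp only [map_pow, Polynomial.aeval_X, Polynomial.eval_pow, Polynomial.eval_X] at hxj
    exact hxj
  rw [hscalar, map_smul, LinearMap.trace_id, smul_eq_mul]

lemma map_trace_of_pow_eq_one {n j : ℕ} (hn : (n : K) ≠ 0) (hf : f ^ n = 1) (σ : K →+* K)
    (hσ : ∀ ζ, ζ ^ n = 1 → σ ζ = ζ ^ j) :
    σ (LinearMap.trace K V f) = LinearMap.trace K V (f ^ j) := by
  have hss : f.IsSemisimple := Module.End.isSemisimple_of_squarefree_aeval_eq_zero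
    (Polynomial.separable_X_pow_sub_C (1 : K) hn one_ne_zero).squarefree (by simp [hf])
  have htrace := trace_pow_eq_sum_of_isSemisimple hss 1
  rw [pow_one] at htrace
  rw [htrace, trace_pow_eq_sum_of_isSemisimple hss j, map_sum]
  refine Finset.sum_congr rfl fun μ hμ ↦ ?_
  obtain ⟨x, hx⟩ := ((Set.Finite.mem_toFinset _).1 hμ).exists_hasEigenvector
  have hμn : μ ^ n = 1 := smul_left_injective K hx.2 <| by
    simpa [hf] using (hx.pow_apply n).symm
  rw [map_mul, map_natCast, pow_one, hσ μ hμn]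

lemma trace_eq_finrank_of_spectrum_subset_one (hf : spectrum K f ⊆ {1}) :
    LinearMap.trace K V f = Module.finrank K V := by
  have hs := IsAlgClosed.splits f.charpoly
  have hroots : f.charpoly.roots = Multiset.replicate (Module.finrank K V) 1 := by
    rw [Multiset.eq_replicate, ← hs.natDegree_eq_card_roots, LinearMap.charpoly_natDegree]
    exact ⟨rfl, fun l hl ↦
      hf ((f.mem_spectrum_iff_isRoot_charpoly l).2 (Polynomial.isRoot_of_mem_roots hl))⟩
  rw [Module.End.trace_eq_sum_roots_charpoly_of_splits hs, hroots, Multiset.sum_replicate,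
    nsmul_one]

lemma mem_spectrum_iff_exists_mul_eq_smul {K A : Type*} [Field K] [Ring A] [Algebra K A]
    [FiniteDimensional K A] {a : A} {l : K} :
    l ∈ spectrum K a ↔ ∃ m : A, m ≠ 0 ∧ a * m = l • m := by
  have hlmul : l ∈ spectrum K a ↔ l ∈ spectrum K (Algebra.lmul K A a) := by
    rw [spectrum.mem_iff, spectrum.mem_iff, ← (Algebra.lmul K A).commutes, ← map_sub,
      Algebra.lmul_isUnit_iff]
  rw [hlmul, ← Module.End.hasEigenvalue_iff_mem_spectrum]
  refine ⟨fun h ↦ ?_, fun ⟨m, hm0, hm⟩ ↦ Module.End.hasEigenvalue_of_hasEigenvector (x := m)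
    ⟨Module.End.mem_eigenspace_iff.2 hm, hm0⟩⟩
  obtain ⟨m, hm⟩ := h.exists_hasEigenvector
  exact ⟨m, hm.2, hm.apply_eq_smul⟩

lemma isIntegral_of_mem_spectrum {R K A : Type*} [CommRing R] [Field K] [Ring A] [Algebra R K]
    [Algebra K A] [Algebra R A] [IsScalarTower R K A] {a : A} (ha : IsIntegral R a) {l : K}
    (hl : l ∈ spectrum K a) : IsIntegral R l := by
  have : Nontrivial A :=
    not_subsingleton_iff_nontrivial.1 fun _ ↦ by simp [spectrum.of_subsingleton] at hl
  obtain ⟨p, hp, hpa⟩ := ha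
  have hpl := spectrum.subset_polynomial_aeval a (p.map (algebraMap R K)) ⟨l, hl, rfl⟩
  rw [Polynomial.aeval_map_algebraMap, Polynomial.aeval_def, hpa] at hpl
  exact ⟨p, hp, by simpa [Polynomial.eval_map] using hpl⟩

end Spectrum

lemma exists_coprime_forall_map_eq_pow {K : Type*} [CommRing K] [IsDomain K] {n : ℕ} [NeZero n]
    [HasEnoughRootsOfUnity K n] {σ : K →+* K} (hσ : Function.Injective σ) :
    ∃ j : ℕ, j.Coprime n ∧ ∀ ζ : K, ζ ^ n = 1 → σ ζ = ζ ^ j := by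
  obtain ⟨ζ, hζ⟩ := HasEnoughRootsOfUnity.exists_primitiveRoot K n
  obtain ⟨j, -, hj, hζj⟩ := hζ.isPrimitiveRoot_iff.1 (hζ.map_of_injective hσ)
  refine ⟨j, hj, fun ξ hξ ↦ ?_⟩
  obtain ⟨k, -, rfl⟩ := hζ.eq_pow_of_pow_eq_one hξ
  rw [map_pow, ← hζj, pow_right_comm]

namespace GroupRing

section Star

variable {R G : Type*} [Semiring R] [StarRing R] [Group G]

/-- The canonical involution `∑ r_g g ↦ ∑ (star r_g) g⁻¹` of a group ring. -/
noncomputable instance : Star R[G] where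
  star x := .ofCoeff <| (x.coeff.equivMapDomain (.inv G)).mapRange star (star_zero R)

@[simp] lemma coeff_star (x : R[G]) (g : G) : (star x).coeff g = star (x.coeff g⁻¹) := rfl

@[simp] lemma star_single (g : G) (r : R) : star (single g r) = single g⁻¹ (star r) := by
  classical
  ext h
  simp [Finsupp.single_apply, apply_ite (star : R → R), inv_eq_iff_eq_inv (a := g)]

noncomputable instance : StarAddMonoid R[G] where
  star_involutive x := by ext; simp
  star_add x y := by ext; simp

noncomputable instance : StarRing R[G] where
  star_add := star_add
  star_mul x y := by
    induction x using MonoidAlgebra.induction_linear with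
    | zero => simp
    | add a b ha hb => simp only [add_mul, mul_add, star_add, ha, hb]
    | single h r =>
      induction y using MonoidAlgebra.induction_linear with
      | zero => simp
      | add a b ha hb => simp only [add_mul, mul_add, star_add, ha, hb]
      | single k s => simp only [star_single, single_mul_single, mul_inv_rev, star_mul]

lemma coeff_mul_star_self_one (x : R[G]) :
    (x * star x).coeff 1 = ∑ g ∈ x.coeff.support, x.coeff g * star (x.coeff g) := by
  simp [coeff_mul_apply_left, Finsupp.sum]

variable [PartialOrder R] [StarOrderedRing R] [NoZeroDivisors R]

lemma eq_zero_of_mul_star_self_eq_zero {x : R[G]} (h : x * star x = 0) : x = 0 := by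
  have hsum := coeff_mul_star_self_one x
  rw [h, coeff_zero, Finsupp.zero_apply, eq_comm,
    Finset.sum_eq_zero_iff_of_nonneg fun _ _ ↦ mul_star_self_nonneg _] at hsum
  ext g
  by_contra hg
  exact hg (by simpa using hsum g (by simpa using hg))

end Star

section IntStar

variable {G : Type*} [Group G]

lemma coeff_mul_star_self_one_eq_sum_sq (x : ℤ[G]) :
    (x * star x).coeff 1 = ∑ g ∈ x.coeff.support, x.coeff g ^ 2 := by
  simp only [coeff_mul_star_self_one, star_trivial, sq]

lemma coeff_sq_le_coeff_mul_star_self_one (x : ℤ[G]) (g : G) :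
    x.coeff g ^ 2 ≤ (x * star x).coeff 1 := by
  rw [coeff_mul_star_self_one_eq_sum_sq]
  by_cases hg : g ∈ x.coeff.support
  · exact Finset.single_le_sum (f := fun h ↦ x.coeff h ^ 2) (fun _ _ ↦ sq_nonneg _) hg
  · simpa [Finsupp.notMem_support_iff.1 hg] using Finset.sum_nonneg fun _ _ ↦ sq_nonneg _

lemma coeff_mul_star_self_one_pos {x : ℤ[G]} (hx : x ≠ 0) : 0 < (x * star x).coeff 1 := by
  obtain ⟨g, hg⟩ := Finsupp.ne_iff.1 (coeff_eq_zero.not.2 hx)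
  exact (sq_pos_of_ne_zero hg).trans_le (coeff_sq_le_coeff_mul_star_self_one x g)

lemma eq_of_or_eq_neg_of_of_coeff_mul_star_self_one {x : ℤ[G]} (h : (x * star x).coeff 1 = 1) :
    ∃ g : G, x = of ℤ G g ∨ x = -of ℤ G g := by
  classical
  obtain ⟨g, hg⟩ : ∃ g, x.coeff g ≠ 0 :=
    Finsupp.ne_iff.1 (coeff_eq_zero.not.2 fun hx ↦ by simp [hx] at h)
  rw [coeff_mul_star_self_one_eq_sum_sq,
    ← Finset.add_sum_erase _ _ (by simpa using hg : g ∈ _)] at h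
  have hrest : 0 ≤ ∑ k ∈ x.coeff.support.erase g, x.coeff k ^ 2 :=
    Finset.sum_nonneg fun _ _ ↦ sq_nonneg _
  have hg1 : 0 < x.coeff g ^ 2 := sq_pos_of_ne_zero hg
  have hzero := (Finset.sum_eq_zero_iff_of_nonneg fun _ _ ↦ sq_nonneg _).1
    (show ∑ k ∈ x.coeff.support.erase g, x.coeff k ^ 2 = 0 by omega)
  have hx : x = single g (x.coeff g) := by
    ext k
    by_cases hk : k = g
    · simp [hk]
    · rw [coeff_single, Finsupp.single_eq_of_ne hk]
      by_contra hk0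
      exact hk0 (pow_eq_zero_iff two_ne_zero |>.1 (hzero k (by simp [hk, hk0])))
  refine ⟨g, (sq_eq_one_iff.1 (show x.coeff g ^ 2 = 1 by omega)).imp (fun h1 ↦ ?_) fun h1 ↦ ?_⟩
  all_goals rw [hx, h1]; simp

end IntStar

section Center

variable {R G : Type*} [CommRing R] [Group G]

lemma mem_center_iff {x : R[G]} :
    x ∈ Subring.center R[G] ↔ ∀ g h, x.coeff (h * g * h⁻¹) = x.coeff g := by
  rw [Subring.mem_center_iff]
  refine ⟨fun hx g h ↦ ?_, fun hx y ↦ ?_⟩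
  · have hcomm := congrArg (fun y ↦ y.coeff (h * g)) (hx (single h 1))
    simpa using hcomm.symm
  · induction y using MonoidAlgebra.induction_linear with
    | zero => simp
    | add a b ha hb => rw [add_mul, mul_add, ha, hb]
    | single h r =>
      ext g
      have hconj := hx (h⁻¹ * g) h
      rw [mul_inv_cancel_left] at hconj
      rw [coeff_single_mul_apply, coeff_mul_single_apply, hconj, mul_comm]

lemma coeff_eq_of_isConj {x : R[G]} (hx : x ∈ Subring.center R[G]) {g h : G} (hgh : IsConj g h) :
    x.coeff g = x.coeff h := by
  obtain ⟨c, rfl⟩ := isConj_iff.1 hgh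
  exact (mem_center_iff.1 hx g c).symm

lemma finite_conjugatesOf {x : R[G]} (hx : x ∈ Subring.center R[G]) {g : G} (hg : x.coeff g ≠ 0) :
    (conjugatesOf g).Finite :=
  x.coeff.support.finite_toSet.subset fun h hgh ↦ by
    simpa [← coeff_eq_of_isConj hx hgh] using hg

lemma mapRingHom_mem_center {S : Type*} [CommRing S] (f : R →+* S) {x : R[G]}
    (hx : x ∈ Subring.center R[G]) : mapRingHom G f x ∈ Subring.center S[G] :=
  mem_center_iff.2 fun g h ↦ by simp [mem_center_iff.1 hx]

variable [StarRing R]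

lemma mul_star_eq_zero_of_mul_eq_zero [PartialOrder R] [StarOrderedRing R] [NoZeroDivisors R]
    {x y : R[G]} (hy : y ∈ Subring.center R[G]) (h : x * y = 0) : x * star y = 0 :=
  eq_zero_of_mul_star_self_eq_zero <| calc
    x * star y * star (x * star y) = x * (star y * y) * star x := by simp [mul_assoc]
    _ = x * y * (star y * star x) := by rw [Subring.mem_center_iff.1 hy]; simp only [mul_assoc]
    _ = 0 := by rw [h, zero_mul]

instance [PartialOrder R] [StarOrderedRing R] [NoZeroDivisors R] :
    IsReduced (Subring.center R[G]) := by
  rw [isReduced_iff_pow_one_lt 2 one_lt_two]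
  rintro ⟨z, hz⟩ hz2
  have hzz : z * z = 0 := by simpa [sq] using congrArg Subtype.val hz2
  exact Subtype.ext (eq_zero_of_mul_star_self_eq_zero (mul_star_eq_zero_of_mul_eq_zero hz hzz))

lemma mul_star_mem_center {x : R[G]} (hx : x ∈ Subring.center R[G]) :
    x * star x ∈ Subring.center R[G] :=
  mul_mem hx (Set.star_mem_center hx)

end Center

section Units

variable {L : Type*} [CommGroup L] [TwoUniqueProds L]

lemma coeff_mul_coeff_eq_zero_of_isDomain {R : Type*} [CommRing R] [IsDomain R] {x y : R[L]}
    (h : x * y = 1) {a b : L} (hab : a ≠ b) : x.coeff a * x.coeff b = 0 := by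
  by_contra! hne
  obtain ⟨ha, hb⟩ := mul_ne_zero_iff.1 hne
  have hx : 1 < x.coeff.support.card :=
    Finset.one_lt_card.2 ⟨a, by simpa using ha, b, by simpa using hb, hab⟩
  have hy : 0 < y.coeff.support.card := by
    simpa [Finset.card_pos, Finsupp.support_nonempty_iff] using right_ne_zero_of_mul_eq_one h
  obtain ⟨p, hp, q, hq, hpq, hup, huq⟩ := TwoUniqueProds.uniqueMul_of_one_lt_card
    (A := x.coeff.support) (B := y.coeff.support) (by nlinarith)
  rw [Finset.mem_product] at hp hq
  have eq_one {p : L × L} (hp : p.1 ∈ x.coeff.support ∧ p.2 ∈ y.coeff.support)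
      (hu : UniqueMul x.coeff.support y.coeff.support p.1 p.2) : p.1 * p.2 = 1 := by
    by_contra hp1
    have hcoeff := coeff_mul_mul_of_uniqueMul hu
    rw [h, one_def, coeff_single, Finsupp.single_eq_of_ne hp1] at hcoeff
    exact mul_ne_zero (by simpa using hp.1) (by simpa using hp.2) hcoeff.symm
  obtain ⟨h1, h2⟩ := hup hq.1 hq.2 ((eq_one hq huq).trans (eq_one hp hup).symm)
  exact hpq (Prod.ext h1.symm h2.symm)

lemma coeff_mul_coeff_eq_zero {R : Type*} [CommRing R] [IsReduced R] {x y : R[L]}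
    (h : x * y = 1) {a b : L} (hab : a ≠ b) : x.coeff a * x.coeff b = 0 := by
  rw [← isNilpotent_iff_eq_zero, nilpotent_iff_mem_prime]
  intro J _
  have hJ : mapRingHom L (Ideal.Quotient.mk J) x * mapRingHom L (Ideal.Quotient.mk J) y = 1 := by
    rw [← map_mul, h, map_one]
  rw [← Ideal.Quotient.eq_zero_iff_mem, map_mul]
  simpa using coeff_mul_coeff_eq_zero_of_isDomain hJ hab

lemma coeff_mul_coeff_eq_zero_of_mem_center {S : Type*} [Ring S] [IsReduced (Subring.center S)]
    {x y : S[L]} (hx : ∀ a, x.coeff a ∈ Subring.center S) (hy : ∀ a, y.coeff a ∈ Subring.center S)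
    (h : x * y = 1) {a b : L} (hab : a ≠ b) : x.coeff a * x.coeff b = 0 := by
  let ι := mapRingHom L (Subring.center S).subtype
  have lift {z : S[L]} (hz : ∀ a, z.coeff a ∈ Subring.center S) : ∃ z', ι z' = z := by
    have : z ∈ Set.range (MonoidAlgebra.map (M := L)
        (Subring.center S).subtype.toAddMonoidHom) := by
      rw [range_map]
      simpa using hz
    exact this
  obtain ⟨x, rfl⟩ := lift hx
  obtain ⟨y, rfl⟩ := lift hy
  have hι : Function.Injective ι := map_injective _ (Subring.subtype_injective _)
  have hxy : x * y = 1 := hι (by rw [map_mul, h, map_one])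
  simpa [ι] using congrArg Subtype.val (coeff_mul_coeff_eq_zero hxy hab)

end Units

section Coaction

variable {R G L : Type*}

/-- The coaction `g ↦ g ⊗ φ g` of `L` on `R[G]`; its coefficient at `a` is the part of an element
of `R[G]` which is supported on the fibre `φ ⁻¹ {a}`. -/
noncomputable def coaction [Semiring R] [Group G] [Group L] (φ : G →* L) : R[G] →+* R[G][L] :=
  (curryRingEquiv : R[L × G] ≃+* R[G][L]).toRingHom.comp (mapDomainRingHom R (φ.prod (.id G)))

lemma coeff_coeff_coaction [Semiring R] [Group G] [Group L] [DecidableEq L] (φ : G →* L)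
    (x : R[G]) (a : L) (g : G) :
    ((coaction φ x).coeff a).coeff g = if φ g = a then x.coeff g else 0 := by
  classical
  induction x using MonoidAlgebra.induction_linear with
  | zero => simp
  | add x y hx hy =>
    simp only [map_add, coeff_add, Finsupp.add_apply, hx, hy]
    split_ifs <;> simp
  | single h r =>
    simp only [coaction, RingEquiv.toRingHom_eq_coe, RingHom.comp_apply, mapDomainRingHom_apply]
    by_cases hg : h = g
    · subst hg
      by_cases ha : φ h = a <;> simp [ha]
    · by_cases ha : φ h = a <;> simp [ha, hg]

lemma coaction_star [Semiring R] [StarRing R] [Group G] [Group L] (φ : G →* L) (x : R[G]) :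
    coaction φ (star x) = star (coaction φ x) := by
  classical
  ext a g
  simp [coeff_coeff_coaction, apply_ite (star : R → R), inv_eq_iff_eq_inv]

lemma coeff_coaction_mem_center [CommRing R] [Group G] [CommGroup L] (φ : G →* L) {x : R[G]}
    (hx : x ∈ Subring.center R[G]) (a : L) : (coaction φ x).coeff a ∈ Subring.center R[G] := by
  classical
  rw [mem_center_iff] at *
  intro g h
  simp [coeff_coeff_coaction, hx]

lemma coeff_mul_star_self_eq_zero [CommRing R] [StarRing R] [PartialOrder R] [StarOrderedRing R]
    [NoZeroDivisors R] [Group G] [CommGroup L] [TwoUniqueProds L] (φ : G →* L) {x y : R[G]}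
    (hx : x ∈ Subring.center R[G]) (hy : y ∈ Subring.center R[G]) (hxy : x * y = 1)
    {g : G} (hg : φ g ≠ 1) : (x * star x).coeff g = 0 := by
  classical
  suffices h : (coaction φ (x * star x)).coeff (φ g) = 0 by
    simpa only [coeff_coeff_coaction, if_true, coeff_zero, Finsupp.zero_apply]
      using congrArg (fun z ↦ z.coeff g) h
  rw [map_mul, coaction_star, coeff_mul_apply_left]
  refine Finset.sum_eq_zero fun a _ ↦ ?_
  refine mul_star_eq_zero_of_mul_eq_zero (coeff_coaction_mem_center φ hx _) ?_
  refine coeff_mul_coeff_eq_zero_of_mem_center (coeff_coaction_mem_center φ hx)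
    (coeff_coaction_mem_center φ hy) (by rw [← map_mul, hxy, map_one]) fun ha ↦ hg ?_
  simpa using ha.symm

end Coaction

section Subgroup

variable {R G H : Type*} [Group G] [Group H]

lemma coeff_mapDomainRingHom_apply [Semiring R] {f : H →* G} (hf : Function.Injective f)
    (x : R[H]) (h : H) : (mapDomainRingHom R f x).coeff (f h) = x.coeff h :=
  Finsupp.mapDomain_apply hf _ _

lemma mapDomainRingHom_star [Semiring R] [StarRing R] (f : H →* G) (x : R[H]) :
    mapDomainRingHom R f (star x) = star (mapDomainRingHom R f x) := by
  induction x using MonoidAlgebra.induction_linear with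
  | zero => simp
  | add a b ha hb => simp only [map_add, star_add, ha, hb]
  | single h r => simp

lemma mem_center_of_mapDomainRingHom_mem_center [Ring R] {f : H →* G} (hf : Function.Injective f)
    {x : R[H]} (hx : mapDomainRingHom R f x ∈ Subring.center R[G]) : x ∈ Subring.center R[H] :=
  Subring.mem_center_iff.2 fun y ↦ mapDomain_injective hf <| by
    have hxy := Subring.mem_center_iff.1 hx (mapDomainRingHom R f y)
    rwa [← map_mul, ← map_mul] at hxy

lemma exists_mapDomainRingHom_subtype_eq [Semiring R] {K : Subgroup G} {x : R[G]}
    (hx : ∀ g, x.coeff g ≠ 0 → g ∈ K) : ∃ y, mapDomainRingHom R K.subtype y = x :=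
  ⟨_, mapDomain_comapDomain (fun g hg ↦ by simpa using hx g (by simpa using hg))
    K.subtype_injective⟩

lemma mem_map_of_coeff_mapDomainRingHom_ne_zero [Semiring R] {f : H →* G} {K : Subgroup H}
    {x : R[H]} (hx : ∀ h, x.coeff h ≠ 0 → h ∈ K) {g : G}
    (hg : (mapDomainRingHom R f x).coeff g ≠ 0) : g ∈ K.map f := by
  classical
  obtain ⟨h, hh, rfl⟩ := Finset.mem_image.1
    (Finsupp.mapDomain_support (Finsupp.mem_support_iff.2 hg))
  exact ⟨h, hx h (Finsupp.mem_support_iff.1 hh), rfl⟩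

end Subgroup

section CentralUnits

variable {R G : Type*} [CommRing R] [Group G]

lemma finiteIndex_center_of_closure_support_eq_top {x y : R[G]} (hx : x ∈ Subring.center R[G])
    (hy : y ∈ Subring.center R[G])
    (hgen : Subgroup.closure (x.coeff.support ∪ y.coeff.support : Set G) = ⊤) :
    (Subgroup.center G).FiniteIndex := by
  refine finiteIndex_center_of_finite_conjugatesOf
    (x.coeff.support.finite_toSet.union y.coeff.support.finite_toSet) hgen ?_
  rintro g (hg | hg)
  · exact finite_conjugatesOf hx (by simpa using hg)
  · exact finite_conjugatesOf hy (by simpa using hg)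

lemma closure_support_normal {x y : R[G]} (hx : x ∈ Subring.center R[G])
    (hy : y ∈ Subring.center R[G]) :
    (Subgroup.closure (x.coeff.support ∪ y.coeff.support : Set G)).Normal := by
  rw [← Subgroup.normalizer_eq_top_iff, eq_top_iff, Subgroup.le_normalizer_closure_iff]
  rintro h - g (hg | hg) <;> refine Subgroup.subset_closure ?_
  · left
    simpa [mem_center_iff.1 hx] using hg
  · right
    simpa [mem_center_iff.1 hy] using hg

variable [StarRing R] [PartialOrder R] [StarOrderedRing R] [NoZeroDivisors R]

lemma mem_ker_toTorsionFreeAbelianization_of_coeff_mul_star_self_ne_zero [Group.FG G]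
    [Finite (commutator G)] {x y : R[G]} (hx : x ∈ Subring.center R[G])
    (hy : y ∈ Subring.center R[G]) (hxy : x * y = 1) {g : G} (hg : (x * star x).coeff g ≠ 0) :
    g ∈ (toTorsionFreeAbelianization G).ker := by
  have : Group.FG (Abelianization G) := QuotientGroup.fg _
  have : Monoid.FG (Abelianization G ⧸ CommGroup.torsion (Abelianization G)) :=
    Group.fg_iff_monoid_fg.1 (QuotientGroup.fg _)
  by_contra hker
  exact hg (coeff_mul_star_self_eq_zero (toTorsionFreeAbelianization G) hx hy hxy hker)

lemma exists_finite_characteristic_subgroup {x y : R[G]} (hx : x ∈ Subring.center R[G])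
    (hy : y ∈ Subring.center R[G]) (hxy : x * y = 1)
    (hgen : Subgroup.closure (x.coeff.support ∪ y.coeff.support : Set G) = ⊤) :
    ∃ T : Subgroup G, T.Characteristic ∧ Finite T ∧ (∀ g, (x * star x).coeff g ≠ 0 → g ∈ T) ∧
      ∀ g, (y * star y).coeff g ≠ 0 → g ∈ T := by
  have := finiteIndex_center_of_closure_support_eq_top hx hy hgen
  have : Finite (commutatorSet G) := finite_commutatorSet
  have : Group.FG G := Group.fg_iff.2
    ⟨_, hgen, x.coeff.support.finite_toSet.union y.coeff.support.finite_toSet⟩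
  have hyx : y * x = 1 := (Subring.mem_center_iff.1 hx y).trans hxy
  exact ⟨(toTorsionFreeAbelianization G).ker, inferInstance, inferInstance,
    fun _ ↦ mem_ker_toTorsionFreeAbelianization_of_coeff_mul_star_self_ne_zero hx hy hxy,
    fun _ ↦ mem_ker_toTorsionFreeAbelianization_of_coeff_mul_star_self_ne_zero hy hx hyx⟩

lemma exists_finite_normal_subgroup {x y : R[G]} (hx : x ∈ Subring.center R[G])
    (hy : y ∈ Subring.center R[G]) (hxy : x * y = 1) :
    ∃ T : Subgroup G, T.Normal ∧ Finite T ∧ (∀ g, (x * star x).coeff g ≠ 0 → g ∈ T) ∧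
      ∀ g, (y * star y).coeff g ≠ 0 → g ∈ T := by
  let S : Set G := x.coeff.support ∪ y.coeff.support
  let N := Subgroup.closure S
  have : N.Normal := closure_support_normal hx hy
  let ι := mapDomainRingHom R N.subtype
  have hι : Function.Injective ι := mapDomain_injective N.subtype_injective
  obtain ⟨x', hx'⟩ : ∃ x', ι x' = x := exists_mapDomainRingHom_subtype_eq fun g hg ↦
    Subgroup.subset_closure (.inl (by simpa using hg))
  obtain ⟨y', hy'⟩ : ∃ y', ι y' = y := exists_mapDomainRingHom_subtype_eq fun g hg ↦
    Subgroup.subset_closure (.inr (by simpa using hg))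
  have hgen : Subgroup.closure (x'.coeff.support ∪ y'.coeff.support : Set N) = ⊤ := by
    have coeff_eq {z' : R[N]} {z : R[G]} (hz : ι z' = z) (n : N) : z'.coeff n = z.coeff n :=
      hz ▸ (coeff_mapDomainRingHom_apply N.subtype_injective z' n).symm
    convert Subgroup.closure_closure_coe_preimage (k := S) using 2
    ext n
    simp [S, coeff_eq hx', coeff_eq hy']
  obtain ⟨T, _, _, hxT, hyT⟩ := exists_finite_characteristic_subgroup
    (mem_center_of_mapDomainRingHom_mem_center N.subtype_injective (hx' ▸ hx))
    (mem_center_of_mapDomainRingHom_mem_center N.subtype_injective (hy' ▸ hy))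
    (hι (by rw [map_mul, map_one, hx', hy', hxy])) hgen
  have mem_map {z : R[N]} (hz : ∀ n, (z * star z).coeff n ≠ 0 → n ∈ T) (g : G)
      (hg : (ι z * star (ι z)).coeff g ≠ 0) : g ∈ T.map N.subtype :=
    mem_map_of_coeff_mapDomainRingHom_ne_zero hz <| by rwa [map_mul, mapDomainRingHom_star]
  have : Finite (T.map N.subtype) := Set.Finite.image _ ‹Finite T›
  exact ⟨T.map N.subtype, inferInstance, inferInstance, hx' ▸ mem_map hxT, hy' ▸ mem_map hyT⟩

end CentralUnits

section FiniteGroup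

variable {R K T : Type*} [CommRing R] [Field K] [Group T]

lemma trace_lsmul_eq_sum [Fintype T] (M : Type*) [AddCommGroup M] [Module K M] [Module K[T] M]
    [IsScalarTower K K[T] M] (x : K[T]) :
    LinearMap.trace K M (Algebra.lsmul K K M x) =
      ∑ t, x.coeff t * LinearMap.trace K M (Algebra.lsmul K K M (of K T t)) := by
  have hx : x = ∑ t, x.coeff t • of K T t := by
    simpa [Finsupp.sum_fintype] using (sum_coeff_single x).symm
  conv_lhs => rw [hx]
  simp only [map_sum, map_smul, smul_eq_mul]

lemma trace_lmul_eq_card_mul_coeff_one [Finite T] (a : R[T]) :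
    LinearMap.trace R R[T] (Algebra.lmul R R[T] a) = Nat.card T * a.coeff 1 := by
  classical
  have : Fintype T := Fintype.ofFinite T
  rw [LinearMap.trace_eq_matrix_trace R (MonoidAlgebra.basis T R), Matrix.trace]
  have hdiag (t : T) : LinearMap.toMatrix (MonoidAlgebra.basis T R) (MonoidAlgebra.basis T R)
      (Algebra.lmul R R[T] a) t t = a.coeff 1 := by
    rw [LinearMap.toMatrix_apply]
    simp [MonoidAlgebra.basis]
  simp only [Matrix.diag_apply, hdiag, Finset.sum_const, Finset.card_univ, nsmul_eq_mul,
    Nat.card_eq_fintype_card]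

variable {F : Type*} [Finite T] [Field F] [CharZero F] [Algebra R F] [Algebra R K] [Algebra F K]
  [IsScalarTower R F K] [IsAlgClosure F K]

lemma mem_range_algebraMap_of_forall_smul_eq {M : Type*} [AddCommGroup M] [Module K M]
    [Module K[T] M] [IsScalarTower K K[T] M] [FiniteDimensional K M] [Nontrivial M] {x : R[T]}
    (hx : ∀ j : ℕ, j.Coprime (Nat.card T) → ∀ t, x.coeff (t ^ j) = x.coeff t) {l : K}
    (hl : ∀ m : M, mapRingHom T (algebraMap R K) x • m = l • m) :
    l ∈ Set.range (algebraMap F K) := by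
  have : Fintype T := Fintype.ofFinite T
  have : CharZero K := charZero_of_injective_algebraMap (algebraMap F K).injective
  have : IsAlgClosed K := IsAlgClosure.isAlgClosed F
  have : IsGalois F K := { to_normal := IsAlgClosure.normal F K }
  let χ (t : T) : K := LinearMap.trace K M (Algebra.lsmul K K M (of K T t))
  have htrace : l * Module.finrank K M = ∑ t, algebraMap R K (x.coeff t) * χ t := by
    have hscalar : Algebra.lsmul K K M (mapRingHom T (algebraMap R K) x) = l • LinearMap.id :=
      LinearMap.ext hl
    have hsum := trace_lsmul_eq_sum M (mapRingHom T (algebraMap R K) x)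
    rw [hscalar, map_smul, LinearMap.trace_id, smul_eq_mul] at hsum
    simpa [χ] using hsum
  have hrank : (Module.finrank K M : K) ≠ 0 := Nat.cast_ne_zero.2 Module.finrank_pos.ne'
  refine (InfiniteGalois.mem_range_algebraMap_iff_fixed l).2 fun σ ↦ mul_right_cancel₀ hrank ?_
  obtain ⟨j, hj, hσ⟩ :=
    exists_coprime_forall_map_eq_pow (n := Nat.card T) (σ := σ.toRingEquiv.toRingHom) σ.injective
  have hσR (r : R) : σ (algebraMap R K r) = algebraMap R K r := (σ.restrictScalars R).commutes r
  have hχ (t : T) : σ (χ t) = χ (t ^ j) := by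
    have hcard : Algebra.lsmul K K M (of K T t) ^ Nat.card T = 1 := by
      rw [← map_pow, ← map_pow, pow_card_eq_one', map_one, map_one]
    simpa [χ, ← map_pow] using
      map_trace_of_pow_eq_one (Nat.cast_ne_zero.2 Nat.card_pos.ne') hcard _ hσ
  calc σ l * Module.finrank K M = σ (l * Module.finrank K M) := by simp
    _ = ∑ t, algebraMap R K (x.coeff (t ^ j)) * χ (t ^ j) := by
      simp only [htrace, map_sum, map_mul, hχ, hx j hj, hσR]
    _ = ∑ t, algebraMap R K (x.coeff t) * χ t :=
      (powCoprime hj.symm).sum_comp fun t ↦ algebraMap R K (x.coeff t) * χ t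
    _ = l * Module.finrank K M := htrace.symm

lemma mem_range_algebraMap_of_mem_spectrum {x : R[T]} (hx : x ∈ Subring.center R[T])
    (hpow : ∀ j : ℕ, j.Coprime (Nat.card T) → ∀ t, x.coeff (t ^ j) = x.coeff t) {l : K}
    (hl : l ∈ spectrum K (mapRingHom T (algebraMap R K) x)) : l ∈ Set.range (algebraMap F K) := by
  obtain ⟨m, hm0, hm⟩ := mem_spectrum_iff_exists_mul_eq_smul.1 hl
  have hcomm := Subring.mem_center_iff.1 (mapRingHom_mem_center (algebraMap R K) hx)
  let W : Submodule K[T] K[T] := LinearMap.ker (LinearMap.toSpanSingleton K[T] K[T]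
    (mapRingHom T (algebraMap R K) x - algebraMap K K[T] l))
  have mem_W (b : K[T]) : b ∈ W ↔ mapRingHom T (algebraMap R K) x * b = l • b := by
    rw [LinearMap.mem_ker, LinearMap.toSpanSingleton_apply, smul_eq_mul, mul_sub, sub_eq_zero,
      hcomm, ← Algebra.commutes, Algebra.smul_def]
  have : Nontrivial W := ⟨⟨m, (mem_W m).2 hm⟩, 0, fun h ↦ hm0 (congrArg Subtype.val h)⟩
  have : FiniteDimensional K W := inferInstanceAs (FiniteDimensional K (W.restrictScalars K))
  exact mem_range_algebraMap_of_forall_smul_eq (M := W) hpow fun b ↦ Subtype.ext ((mem_W b).1 b.2)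

lemma sq_eq_one_of_mem_spectrum [Algebra ℚ K] [IsAlgClosure ℚ K] {v w : ℤ[T]}
    (hv : v ∈ Subring.center ℤ[T]) (hvw : v * w = 1)
    (hpow : ∀ j : ℕ, j.Coprime (Nat.card T) → ∀ t, v.coeff (t ^ j) = v.coeff t) {l : K}
    (hl : l ∈ spectrum K (mapRingHom T (algebraMap ℤ K) v)) : l ^ 2 = 1 := by
  have : CharZero K := charZero_of_injective_algebraMap (algebraMap ℚ K).injective
  let f := mapRingHom T (algebraMap ℤ K)
  have isIntegral {x : ℤ[T]} {μ : K} (hμ : μ ∈ spectrum K (f x)) : IsIntegral ℤ μ :=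
    isIntegral_of_mem_spectrum ((Algebra.IsIntegral.isIntegral x).map f.toIntAlgHom) hμ
  have exists_int {q : ℚ} (hq : IsIntegral ℤ (algebraMap ℚ K q)) : ∃ z : ℤ, (z : ℚ) = q :=
    IsIntegrallyClosed.isIntegral_iff.1 <|
      (isIntegral_algebraMap_iff (algebraMap ℚ K).injective).1 hq
  have hwv : w * v = 1 := (Subring.mem_center_iff.1 hv w).trans hvw
  let u : K[T]ˣ := Units.map (f : ℤ[T] →* K[T]) ⟨v, w, hvw, hwv⟩
  have hl' : l⁻¹ ∈ spectrum K (f w) := spectrum.inv₀_mem_inv (a := u) hl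
  obtain ⟨q, rfl⟩ := mem_range_algebraMap_of_mem_spectrum (F := ℚ) hv hpow hl
  obtain ⟨z, rfl⟩ := exists_int (isIntegral hl)
  obtain ⟨z', hz'⟩ := exists_int (q := (z : ℚ)⁻¹) (by rw [map_inv₀]; exact isIntegral hl')
  have hz0 : (z : ℚ) ≠ 0 := by simpa using spectrum.ne_zero_of_mem_of_unit (a := u) hl
  have hzz' : z * z' = 1 := by
    have := mul_inv_cancel₀ hz0
    rw [← hz'] at this
    exact_mod_cast this
  rcases Int.eq_one_or_neg_one_of_mul_eq_one hzz' with rfl | rfl <;> simp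

theorem coeff_mul_self_one_eq_one {v w : ℤ[T]} (hv : v ∈ Subring.center ℤ[T]) (hvw : v * w = 1)
    (hpow : ∀ j : ℕ, j.Coprime (Nat.card T) → ∀ t, v.coeff (t ^ j) = v.coeff t) :
    (v * v).coeff 1 = 1 := by
  obtain ⟨K, _, _, _⟩ : ∃ (K : Type) (_ : Field K) (_ : Algebra ℚ K), IsAlgClosure ℚ K :=
    ⟨AlgebraicClosure ℚ, inferInstance, AlgebraicClosure.instAlgebra ℚ, inferInstance⟩
  have : CharZero K := charZero_of_injective_algebraMap (algebraMap ℚ K).injective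
  have : IsAlgClosed K := IsAlgClosure.isAlgClosed ℚ
  let a := mapRingHom T (algebraMap ℤ K) v
  have hspec : spectrum K (Algebra.lmul K K[T] (a ^ 2)) ⊆ {1} := by
    refine (AlgHom.spectrum_apply_subset _ _).trans ?_
    rw [spectrum.map_pow_of_pos a two_pos]
    rintro _ ⟨l, hl, rfl⟩
    exact sq_eq_one_of_mem_spectrum hv hvw hpow hl
  have htrace := (trace_lmul_eq_card_mul_coeff_one (a ^ 2)).symm.trans
    (trace_eq_finrank_of_spectrum_subset_one hspec)
  have : Fintype T := Fintype.ofFinite T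
  rw [Module.finrank_eq_card_basis (MonoidAlgebra.basis T K), Nat.card_eq_fintype_card] at htrace
  have hcard : (Fintype.card T : K) ≠ 0 := Nat.cast_ne_zero.2 Fintype.card_ne_zero
  have h1 : (a ^ 2).coeff 1 = 1 := mul_left_cancel₀ hcard (htrace.trans (mul_one _).symm)
  rw [sq, ← map_mul, coeff_mapRingHom] at h1
  exact (algebraMap ℤ K).injective_int (by rw [h1, map_one])

end FiniteGroup

section Cut

variable {G : Type*} [Group G]

lemma coeff_pow_eq_of_isRSElement {v : ℤ[G]} (hv : v ∈ Subring.center ℤ[G]) (hstar : star v = v)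
    {g : G} (hg : IsRSElement g) {j : ℕ} (hj : 0 < j) (hjg : j.Coprime (orderOf g)) :
    v.coeff (g ^ j) = v.coeff g := by
  rcases hg j hj hjg with h | h
  · exact coeff_eq_of_isConj hv h
  · rw [coeff_eq_of_isConj hv h, ← hstar, coeff_star, inv_inv, star_trivial, hstar]

lemma coeff_mul_self_one_eq_one_of_isRSElement {v z : ℤ[G]} (hv : v ∈ Subring.center ℤ[G])
    (hstar : star v = v) (hvz : v * z = 1) {T : Subgroup G} [Finite T]
    (hvT : ∀ g, v.coeff g ≠ 0 → g ∈ T) (hzT : ∀ g, z.coeff g ≠ 0 → g ∈ T)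
    (hRS : ∀ t ∈ T, IsRSElement t) : (v * v).coeff 1 = 1 := by
  obtain ⟨v, rfl⟩ := exists_mapDomainRingHom_subtype_eq hvT
  obtain ⟨z, rfl⟩ := exists_mapDomainRingHom_subtype_eq hzT
  have hinj : Function.Injective (mapDomainRingHom ℤ T.subtype) :=
    mapDomain_injective T.subtype_injective
  have coeff_eq (x : ℤ[T]) := coeff_mapDomainRingHom_apply T.subtype_injective x
  rw [← map_mul]
  refine (coeff_eq _ 1).trans <| coeff_mul_self_one_eq_one (w := z)
    (mem_center_of_mapDomainRingHom_mem_center T.subtype_injective hv)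
    (hinj (by rw [map_mul, hvz, map_one])) fun j hj t ↦ ?_
  rcases j.eq_zero_or_pos with rfl | hj0
  · have : Subsingleton T := (Nat.card_eq_one_iff_unique.1 (by simpa using hj)).1
    rw [Subsingleton.elim (t ^ 0) t]
  · have hjt : j.Coprime (orderOf (t : G)) := by
      rw [Subgroup.orderOf_coe]
      exact hj.coprime_dvd_right (orderOf_dvd_natCard t)
    have := coeff_pow_eq_of_isRSElement hv hstar (hRS t t.2) hj0 hjt
    rw [← coeff_eq v t, ← coeff_eq v (t ^ j)]
    exact this

theorem isCutGroup_of_forall_finite_normal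
    (hRS : ∀ T : Subgroup G, T.Normal → Finite T → ∀ t ∈ T, IsRSElement t) : IsCutGroup G := by
  rintro ⟨u, w, huw, hwu⟩ (hu : u ∈ _)
  have hw : w ∈ Subring.center ℤ[G] := Set.units_inv_mem_center (a := ⟨u, w, huw, hwu⟩) hu
  obtain ⟨T, hT, _, huT, hwT⟩ := exists_finite_normal_subgroup hu hw huw
  have hvz : u * star u * (w * star w) = 1 := calc
    u * star u * (w * star w) = u * (w * star u) * star w := by
      rw [← Subring.mem_center_iff.1 hw (star u)]; simp only [mul_assoc]
    _ = star (w * u) := by rw [← mul_assoc, huw, one_mul, star_mul]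
    _ = 1 := by rw [hwu, star_one]
  have hv1 := coeff_mul_self_one_eq_one_of_isRSElement (mul_star_mem_center hu)
    (by simp) hvz huT hwT (hRS T hT ‹_›)
  have hle : (u * star u).coeff 1 ^ 2 ≤ 1 := by
    have := coeff_sq_le_coeff_mul_star_self_one (u * star u) 1
    rwa [star_mul, star_star, hv1] at this
  have hpos : 0 < (u * star u).coeff 1 :=
    coeff_mul_star_self_one_pos (left_ne_zero_of_mul_eq_one huw)
  exact eq_of_or_eq_neg_of_of_coeff_mul_star_self_one (by nlinarith)

end Cut

end GroupRing

section Amalgam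

variable {ι A : Type*} {𝒢 : ι → Type*} [Group A] [∀ i, Group (𝒢 i)] {φ : ∀ i, A →* 𝒢 i}

variable (φ) in
/-- `HasReducedWord φ i j x` says that `x` is the product of a nonempty reduced word, with no letter
in the amalgamated subgroup, whose first letter lies in `𝒢 i` and whose last letter lies in
`𝒢 j`. -/
def HasReducedWord (i j : ι) (x : PushoutI φ) : Prop :=
  ∃ w : CoprodI.NeWord 𝒢 i j, Reduced φ w.toWord ∧ ofCoprodI w.prod = x

lemma reduced_toWord_append {i j k l : ι} {w₁ : CoprodI.NeWord 𝒢 i j} {hjk : j ≠ k}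
    {w₂ : CoprodI.NeWord 𝒢 k l} :
    Reduced φ (w₁.append hjk w₂).toWord ↔ Reduced φ w₁.toWord ∧ Reduced φ w₂.toWord :=
  List.forall_mem_append

lemma hasReducedWord_of {i : ι} {g : 𝒢 i} (hg : g ∉ (φ i).range) :
    HasReducedWord φ i i (of i g) := by
  refine ⟨.singleton g fun h ↦ hg (h ▸ one_mem _), fun p hp ↦ ?_, by simp⟩
  rwa [List.mem_singleton.1 hp]

namespace HasReducedWord

variable {i j k l : ι} {x y : PushoutI φ}

lemma mul (hx : HasReducedWord φ i j x) (hjk : j ≠ k) (hy : HasReducedWord φ k l y) :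
    HasReducedWord φ i l (x * y) := by
  obtain ⟨w₁, hw₁, rfl⟩ := hx
  obtain ⟨w₂, hw₂, rfl⟩ := hy
  exact ⟨w₁.append hjk w₂, reduced_toWord_append.2 ⟨hw₁, hw₂⟩, by simp⟩

lemma base_mul (a : A) (hx : HasReducedWord φ i j x) : HasReducedWord φ i j (base φ a * x) := by
  obtain ⟨w, hw, rfl⟩ := hx
  induction w with
  | @singleton i g hg =>
    have hg : g ∉ (φ i).range := hw ⟨i, g⟩ (List.mem_singleton_self _)
    rw [CoprodI.NeWord.prod_singleton, ofCoprodI_of, ← of_apply_eq_base φ i, ← map_mul]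
    exact hasReducedWord_of <|
      mt (Subgroup.mul_mem_cancel_left _ (MonoidHom.mem_range.2 ⟨a, rfl⟩)).1 hg
  | append w₁ hjk w₂ ih _ =>
    obtain ⟨hw₁, hw₂⟩ := reduced_toWord_append.1 hw
    rw [CoprodI.NeWord.append_prod, map_mul, ← mul_assoc]
    exact (ih hw₁).mul hjk ⟨w₂, hw₂, rfl⟩

lemma notMem_range_base (hinj : ∀ i, Function.Injective (φ i)) (hx : HasReducedWord φ i j x) :
    x ∉ (base φ).range := by
  obtain ⟨w, hw, rfl⟩ := hx
  exact fun h ↦ w.toList_ne_nil (congrArg CoprodI.Word.toList (hw.eq_empty_of_mem_range hinj h))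

lemma pow (hij : i ≠ j) (hx : HasReducedWord φ i j x) {n : ℕ} (hn : n ≠ 0) :
    HasReducedWord φ i j (x ^ n) := by
  induction n, Nat.one_le_iff_ne_zero.2 hn using Nat.le_induction with
  | base => rwa [pow_one]
  | succ n hn' ih => rw [pow_succ]; exact (ih (by lia)).mul hij.symm hx

lemma not_isOfFinOrder (hinj : ∀ i, Function.Injective (φ i)) (hij : i ≠ j)
    (hx : HasReducedWord φ i j x) : ¬ IsOfFinOrder x := by
  rw [isOfFinOrder_iff_pow_eq_one]
  rintro ⟨n, hn, hxn⟩
  exact (hx.pow hij hn.ne').notMem_range_base hinj (hxn ▸ one_mem _)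

end HasReducedWord

lemma exists_hasReducedWord (hinj : ∀ i, Function.Injective (φ i)) {x : PushoutI φ}
    (hx : x ∉ (base φ).range) : ∃ i j, HasReducedWord φ i j x := by
  classical
  obtain ⟨d⟩ := NormalWord.transversal_nonempty φ hinj
  obtain ⟨w, rfl⟩ := (NormalWord.equiv (d := d)).symm.surjective x
  have hred : Reduced φ w.toWord := by
    rintro ⟨i, g⟩ hg hgφ
    have hgd : g ∈ d.set i := w.normalized i g hg
    have hg1 : g = 1 := by
      rw [← (d.compl i).equiv_snd_eq_self_iff_mem (one_mem _)] at hgd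
      rw [← hgd]
      exact congrArg Subtype.val
        ((d.compl i).equiv_snd_eq_one_of_mem_of_one_mem (d.one_mem i) hgφ)
    exact w.ne_one _ hg hg1
  have hne : w.toWord ≠ .empty := fun h ↦ hx ⟨w.head, by
    simp [NormalWord.equiv, NormalWord.prod, h]⟩
  obtain ⟨i, j, w', hw'⟩ := CoprodI.NeWord.of_word w.toWord hne
  refine ⟨i, j, .base_mul w.head ⟨w', hw' ▸ hred, ?_⟩⟩
  rw [CoprodI.NeWord.prod, hw']

lemma le_range_base_of_finite (hinj : ∀ i, Function.Injective (φ i)) {i₁ i₂ : ι} (hi : i₁ ≠ i₂)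
    (h₁ : ¬ Function.Surjective (φ i₁)) (h₂ : ¬ Function.Surjective (φ i₂))
    (T : Subgroup (PushoutI φ)) [T.Normal] [Finite T] : T ≤ (base φ).range := by
  intro t ht
  by_contra htA
  obtain ⟨i, j, htw⟩ := exists_hasReducedWord hinj htA
  rcases ne_or_eq i j with hij | rfl
  · exact htw.not_isOfFinOrder hinj hij (isOfFinOrder_of_mem ht)
  obtain ⟨k, hik, hk⟩ : ∃ k, i ≠ k ∧ ¬ Function.Surjective (φ k) := by
    rcases eq_or_ne i i₁ with rfl | hi₁
    exacts [⟨i₂, hi, h₂⟩, ⟨i₁, hi₁, h₁⟩]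
  obtain ⟨g, hg⟩ : ∃ g, g ∉ (φ k).range := by
    simpa only [← MonoidHom.range_eq_top, Subgroup.eq_top_iff', not_forall] using hk
  have htgtg : HasReducedWord φ i k (t * (of k g * t * (of k g)⁻¹)) := by
    rw [← map_inv]
    exact htw.mul hik (((hasReducedWord_of hg).mul hik.symm htw).mul hik
      (hasReducedWord_of (mt inv_mem_iff.1 hg)))
  exact htgtg.not_isOfFinOrder hinj hik
    (isOfFinOrder_of_mem (mul_mem ht (Subgroup.Normal.conj_mem inferInstance t ht _)))

end Amalgam

lemma IsRSElement.map_of_injective {G H : Type*} [Group G] [Group H] {f : G →* H}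
    (hf : Function.Injective f) {x : G} (hx : IsRSElement x) : IsRSElement (f x) := by
  intro j hj hjx
  rw [orderOf_injective f hf] at hjx
  rw [← map_pow, ← map_inv]
  exact (hx j hj hjx).imp f.map_isConj f.map_isConj

theorem isCutGroup_amalgam_general {ι A : Type*} [Group A] {𝒢 : ι → Type*} [∀ i, Group (𝒢 i)]
    (φ : ∀ i, A →* 𝒢 i) (hinj : ∀ i, Function.Injective (φ i)) {i j : ι} (hij : i ≠ j)
    (hi : ¬ Function.Surjective (φ i)) (hj : ¬ Function.Surjective (φ j)) {k : ι}
    (hRS : IsRSSubgroup (φ k).range) : IsCutGroup (PushoutI φ) := by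
  refine GroupRing.isCutGroup_of_forall_finite_normal fun T _ _ t ht ↦ ?_
  obtain ⟨a, rfl⟩ := le_range_base_of_finite hinj hij hi hj T ht
  have hfin : IsOfFinOrder (base φ a) := isOfFinOrder_of_mem ht
  have hof : Function.Injective (of (φ := φ) k) := of_injective hinj k
  rw [← of_apply_eq_base φ k] at hfin ⊢
  exact (hRS _ ⟨a, rfl⟩ (hof.isOfFinOrder_iff.1 hfin)).map_of_injective hof

/-- Let `Π = G ∗_A G'` be the amalgamated free product of the groups `G = 𝒢 false` and
`G' = 𝒢 true` over `A`, i.e. the pushout of two injective homomorphisms `φ i : A →* 𝒢 i`,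
where neither `φ i` is surjective (so `A` is a proper subgroup of both factors).
If the image of `A` is an RS-subgroup of `G` or of `G'`, then `Π` is a cut-group. -/
theorem isCutGroup_amalgam {A : Type*} [Group A] {𝒢 : Bool → Type*} [∀ i, Group (𝒢 i)]
    (φ : ∀ i, A →* 𝒢 i)
    (hinj : ∀ i, Function.Injective (φ i))
    (hproper : ∀ i, ¬ Function.Surjective (φ i))
    (hRS : IsRSSubgroup (φ false).range ∨ IsRSSubgroup (φ true).range) :
    IsCutGroup (Monoid.PushoutI φ) := by
  rcases hRS with h | h
  all_goals exact isCutGroup_amalgam_general φ hinj Bool.false_ne_true (hproper _) (hproper _) h
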